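/- arXiv:1110.0868 — 3 statements merged into one kernel-verified Lean document; each statement's English description precedes it below -/
import Mathlib

section
/- Fix integers j, k ≥ 1, and l with |l| ≤ k+1 and l ≡ k+1 (mod 2), let σ be as defined, and let S = [j−3k+3, j+3k−3]_2 \ {j+l−2k, j+l+σ, j+l+2k}. Then there exist ε ∈ {1,−1}, a monomial M in ℤ[y_i : i ∈ ℤ], and nonnegative integers a, b, c with a+b+c = k such that F_{j,k}|_S = ε·M·(1+y_{j+l−2k})^a·(1+y_{j+l+σ})^b·(1+y_{j+l+2k})^c. In particular, F_{j,k}|_S ≠ 0. -/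
/-!
Covering relations in `P_k` only join an element of `Q_k` to an element of `Q_{k+1}`. An order ideal
therefore consists of its trace `J` on `Q_k`, of the elements of `Q_{k+1}` below `J`, and of an
arbitrary set of free elements of `Q_{k+1}`: those above no element of `Q_k` outside `J` and below
no element of `J`. Summing over the free elements turns each of them into a factor `1 + y`, and the
substitution kills every trace with a free element whose variable is sent to `-1`.

Traces correspond to the corner sum matrices of `k × k` alternating sign matrices, and free elements
to the entries `1`. The variables that survive the substitution lie over the cells of the `k × k`
grid on three lines `3r + s = const`, and `σ` is chosen such that these lines meet every row and
every column of the grid in exactly one cell. Since every row of an alternating sign matrix contains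
an entry `1`, the only matrix whose entries `1` all lie on the lines is a permutation matrix. It has
`k` free elements, whose factors `1 + y` are the only ones which are not variables or `-1`.
-/

open MvPolynomial
open scoped Classical

noncomputable section

/-- The set `Q_k`: triples `(r,s,t)` with `|r|+|s| ≤ k-2`, `r+s ≡ k (mod 2)`,
`t ≡ 2|s|-k+2 (mod 4)` and `2|s|-k+2 ≤ t ≤ k-2-2|r|`. -/
def pentagramQ (k : ℤ) : Set (ℤ × ℤ × ℤ) :=
  {p | |p.1| + |p.2.1| ≤ k - 2 ∧ (2 : ℤ) ∣ (p.1 + p.2.1 - k) ∧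
    (4 : ℤ) ∣ (p.2.2 - (2 * |p.2.1| - k + 2)) ∧
    2 * |p.2.1| - k + 2 ≤ p.2.2 ∧ p.2.2 ≤ k - 2 - 2 * |p.1|}

/-- The set `P_k = Q_k ∪ Q_{k+1}`. -/
def pentagramP (k : ℤ) : Set (ℤ × ℤ × ℤ) := pentagramQ k ∪ pentagramQ (k + 1)

/-- The covering relation: `(r',s',t')` covers `(r,s,t)` iff `t' = t + 1` and
`|r'-r| + |s'-s| = 1`. -/
def pentagramCovers (x y : ℤ × ℤ × ℤ) : Prop :=
  y.2.2 = x.2.2 + 1 ∧ |y.1 - x.1| + |y.2.1 - x.2.1| = 1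

/-- The partial order on `P_k`: the reflexive-transitive closure of the covering
relation within `P_k`. -/
def pentagramLe (k : ℤ) : (ℤ × ℤ × ℤ) → (ℤ × ℤ × ℤ) → Prop :=
  Relation.ReflTransGen
    (fun x y => x ∈ pentagramP k ∧ y ∈ pentagramP k ∧ pentagramCovers x y)

/-- An order ideal of `P_k`: a downward-closed subset of `P_k`. -/
def IsPentagramOrderIdeal (k : ℤ) (I : Set (ℤ × ℤ × ℤ)) : Prop :=
  I ⊆ pentagramP k ∧ ∀ x y, y ∈ I → pentagramLe k x y → x ∈ I

/-- `P_k` realized as a `Finset` (it is contained in the displayed finite box). -/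
def pentagramPFinset (k : ℤ) : Finset (ℤ × ℤ × ℤ) :=
  ((Finset.Icc (-(k-1)) (k-1)) ×ˢ (Finset.Icc (-(k-1)) (k-1)) ×ˢ
    (Finset.Icc (-(k-1)) (k-1))).filter (fun p => p ∈ pentagramP k)

/-- The F-polynomial `F_{j,k} = Σ_{order ideals I of P_k} Π_{(r,s,t) ∈ I} y_{3r+s+j}`,
as an element of `ℤ[y_i : i ∈ ℤ] = MvPolynomial ℤ ℤ`. -/
def pentagramF (j k : ℤ) : MvPolynomial ℤ ℤ :=
  ∑ I ∈ (pentagramPFinset k).powerset.filter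
      (fun I : Finset (ℤ × ℤ × ℤ) => IsPentagramOrderIdeal k (↑I : Set (ℤ × ℤ × ℤ))),
    ∏ p ∈ I, X (3 * p.1 + p.2.1 + j)

/-- The ring endomorphism of `ℤ[y_i : i ∈ ℤ]` sending `y_i ↦ -1` for `i ∈ S`
and fixing the other variables; `substNeg S F` is `F|_S`. -/
def substNeg (S : Set ℤ) : MvPolynomial ℤ ℤ →+* MvPolynomial ℤ ℤ :=
  (MvPolynomial.aeval
    (fun i : ℤ => if i ∈ S then (-1 : MvPolynomial ℤ ℤ) else X i)).toRingHom

/-- The arithmetic progression `[a,b]_d = {a, a+d, a+2d, …, b}` (as a subset of `ℤ`). -/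
def AP (a b d : ℤ) : Set ℤ := {x | a ≤ x ∧ x ≤ b ∧ d ∣ (x - a)}

/-- The shift `σ`: `0` if `k` is odd, `-2` if `k` is even and `l+k ≡ 1 (mod 4)`,
and `2` if `k` is even and `l+k ≡ 3 (mod 4)`. -/
def pentagramSigma (k l : ℤ) : ℤ :=
  if k % 2 = 1 then 0 else if (l + k) % 4 = 1 then -2 else 2

/-! ### Ideals of a bipartite relation -/

section Bipartite

variable {α R : Type*} [DecidableEq α] [CommSemiring R] {rel : α → α → Prop} {Q Q' J : Finset α}

/-- The subsets of `P` closed downwards along `rel`, i.e. the order ideals of `P` for the order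
generated by `rel`. -/
def relIdeals (rel : α → α → Prop) (P : Finset α) : Finset (Finset α) :=
  P.powerset.filter fun I => ∀ x ∈ P, ∀ y ∈ I, rel x y → x ∈ I

/-- Subsets `J ⊆ Q` closed under two-step descents through `Q'`. If `rel` only joins `Q` and `Q'`,
they are the traces `I ∩ Q` of the ideals `I` of `Q ∪ Q'`. -/
structure IsTrace (rel : α → α → Prop) (Q Q' J : Finset α) : Prop where
  subset : J ⊆ Q
  descend : ∀ x ∈ Q, ∀ y ∈ Q', ∀ z ∈ J, rel x y → rel y z → x ∈ J

/-- The least ideal with trace `J`. It adds to `J` the elements of `Q'` below some element of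
`J`. -/
def minIdeal (rel : α → α → Prop) (Q' J : Finset α) : Finset α :=
  J ∪ Q'.filter fun x => ∃ y ∈ J, rel x y

/-- The free elements of `Q'` for a trace `J`: an ideal with trace `J` may contain or omit each of
them independently of the others. -/
def freeElements (rel : α → α → Prop) (Q Q' J : Finset α) : Finset α :=
  Q'.filter fun x => (∀ y ∈ Q, rel y x → y ∈ J) ∧ ∀ y ∈ J, ¬ rel x y

lemma disjoint_minIdeal_freeElements (hd : Disjoint Q Q') (hJ : J ⊆ Q) :
    Disjoint (minIdeal rel Q' J) (freeElements rel Q Q' J) := by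
  rw [Finset.disjoint_left] at hd ⊢
  simp only [minIdeal, freeElements, Finset.mem_union, Finset.mem_filter]
  grind

lemma isTrace_inter_of_mem_relIdeals {I : Finset α} (hI : I ∈ relIdeals rel (Q ∪ Q')) :
    IsTrace rel Q Q' (I ∩ Q) := by
  simp only [relIdeals, Finset.mem_filter, Finset.mem_union] at hI
  refine ⟨Finset.inter_subset_right, fun x hx y hy z hz hxy hyz => ?_⟩
  have hyI : y ∈ I := hI.2 y (.inr hy) z (Finset.mem_of_mem_inter_left hz) hyz
  exact Finset.mem_inter.2 ⟨hI.2 x (.inl hx) y hyI hxy, hx⟩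

lemma filter_relIdeals_inter_eq (hd : Disjoint Q Q') (hQ : ∀ x ∈ Q, ∀ y ∈ Q, ¬ rel x y)
    (hQ' : ∀ x ∈ Q', ∀ y ∈ Q', ¬ rel x y) (hJ : IsTrace rel Q Q' J) :
    (relIdeals rel (Q ∪ Q')).filter (fun I => I ∩ Q = J) =
      Finset.Icc (minIdeal rel Q' J) (minIdeal rel Q' J ∪ freeElements rel Q Q' J) := by
  obtain ⟨hJQ, hdesc⟩ := hJ
  rw [Finset.disjoint_left] at hd
  ext I
  simp only [relIdeals, minIdeal, freeElements, Finset.mem_filter, Finset.mem_powerset,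
    Finset.mem_Icc, Finset.subset_iff, Finset.mem_union, Finset.ext_iff, Finset.mem_inter]
  constructor
  · rintro ⟨⟨hIQ, hdown⟩, hIJ⟩
    have hforced : ∀ x ∈ Q', (∃ y ∈ J, rel x y) → x ∈ I :=
      fun x hx ⟨y, hy, hxy⟩ => hdown x (.inr hx) y ((hIJ y).2 hy).1 hxy
    grind
  · rintro ⟨hmin, hmax⟩
    have hQ'I : ∀ x ∈ I, x ∈ Q' → ∀ y ∈ Q, rel y x → y ∈ J := by grind
    grind

lemma sum_Icc_prod {A B : Finset α} (h : Disjoint A B) (w : α → R) :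
    ∑ I ∈ Finset.Icc A (A ∪ B), ∏ p ∈ I, w p = (∏ p ∈ A, w p) * ∏ p ∈ B, (1 + w p) := by
  rw [Finset.Icc_eq_image_powerset Finset.subset_union_left, Finset.union_sdiff_cancel_left h,
    Finset.sum_image, Finset.prod_one_add, Finset.mul_sum]
  · exact Finset.sum_congr rfl fun T hT =>
      Finset.prod_union (h.mono_right (Finset.mem_powerset.1 hT))
  · intro T hT T' hT' he
    simp only [Finset.coe_powerset, Set.mem_preimage, Set.mem_powerset_iff, Finset.coe_subset]
      at hT hT'
    have he : A ∪ T = A ∪ T' := he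
    rw [← Finset.union_sdiff_cancel_left (h.mono_right hT), he,
      Finset.union_sdiff_cancel_left (h.mono_right hT')]

theorem sum_relIdeals_eq_sum_isTrace (hd : Disjoint Q Q') (hQ : ∀ x ∈ Q, ∀ y ∈ Q, ¬ rel x y)
    (hQ' : ∀ x ∈ Q', ∀ y ∈ Q', ¬ rel x y) (w : α → R) :
    ∑ I ∈ relIdeals rel (Q ∪ Q'), ∏ p ∈ I, w p =
      ∑ J ∈ Q.powerset.filter (IsTrace rel Q Q'),
        (∏ p ∈ minIdeal rel Q' J, w p) * ∏ p ∈ freeElements rel Q Q' J, (1 + w p) := by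
  have htrace : ∀ I ∈ relIdeals rel (Q ∪ Q'), I ∩ Q ∈ Q.powerset.filter (IsTrace rel Q Q') :=
    fun I hI => Finset.mem_filter.2
      ⟨Finset.mem_powerset.2 Finset.inter_subset_right, isTrace_inter_of_mem_relIdeals hI⟩
  rw [← Finset.sum_fiberwise_of_maps_to htrace]
  refine Finset.sum_congr rfl fun J hJ => ?_
  have hJ : IsTrace rel Q Q' J := (Finset.mem_filter.1 hJ).2
  rw [filter_relIdeals_inter_eq hd hQ hQ' hJ,
    sum_Icc_prod (disjoint_minIdeal_freeElements hd hJ.subset)]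

end Bipartite

/-! ### Grid coordinates on `Q_k` and `Q_{k+1}` -/

section Grid

variable {k i m n i' m' n' : ℤ} {x y : ℤ × ℤ × ℤ}

/-- The element of the lattice containing `Q_k` at level `n` over the corner `(i, m)` of a `k × k`
grid of cells, `0 ≤ i, m ≤ k`. The level `n` decreases as `t` increases. -/
def cornerPt (k i m n : ℤ) : ℤ × ℤ × ℤ := (i + m - k, i - m, 2 * (i + m) - k - 2 - 4 * n)

/-- The element of the lattice containing `Q_{k+1}` at level `n` over the cell of the `k × k` grid
with corners `(i, m)`, `(i + 1, m)`, `(i, m + 1)`, `(i + 1, m + 1)`. The cells are the inner corners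
of a grid of size `k + 1`. -/
def cellPt (k i m n : ℤ) : ℤ × ℤ × ℤ := cornerPt (k + 1) (i + 1) (m + 1) n

lemma cornerPt_inj : cornerPt k i m n = cornerPt k i' m' n' ↔ i = i' ∧ m = m' ∧ n = n' := by
  simp only [cornerPt, Prod.mk.injEq]
  omega

lemma cornerPt_mem_pentagramQ :
    cornerPt k i m n ∈ pentagramQ k ↔ 0 ≤ n ∧ i + m - k ≤ n ∧ n < i ∧ n < m := by
  simp only [cornerPt, pentagramQ, Set.mem_ofPred_eq, Int.abs_eq_natAbs]
  omega

lemma cellPt_mem_pentagramQ :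
    cellPt k i m n ∈ pentagramQ (k + 1) ↔ 0 ≤ n ∧ i + m + 1 - k ≤ n ∧ n ≤ i ∧ n ≤ m := by
  rw [cellPt, cornerPt_mem_pentagramQ]
  omega

lemma exists_eq_cornerPt (hx : x ∈ pentagramQ k) : ∃ i m n, x = cornerPt k i m n := by
  obtain ⟨r, s, t⟩ := x
  simp only [pentagramQ, Set.mem_ofPred_eq, Int.abs_eq_natAbs] at hx
  refine ⟨(r + s + k) / 2, (r - s + k) / 2, (2 * r + k - 2 - t) / 4, ?_⟩
  simp only [cornerPt, Prod.mk.injEq]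
  omega

lemma exists_eq_cellPt (hx : x ∈ pentagramQ (k + 1)) : ∃ i m n, x = cellPt k i m n := by
  obtain ⟨i, m, n, rfl⟩ := exists_eq_cornerPt hx
  exact ⟨i - 1, m - 1, n, by simp only [cellPt, sub_add_cancel]⟩

lemma pentagramCovers_cellPt_cornerPt :
    pentagramCovers (cellPt k i m n) (cornerPt k i' m' n') ↔
      (i' = i ∧ m' = m ∧ n' = n - 1) ∨ (i' = i + 1 ∧ m' = m + 1 ∧ n' = n) := by
  simp only [pentagramCovers, cellPt, cornerPt, Int.abs_eq_natAbs]
  omega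

lemma pentagramCovers_cornerPt_cellPt :
    pentagramCovers (cornerPt k i' m' n') (cellPt k i m n) ↔
      (i' = i + 1 ∧ m' = m ∧ n' = n) ∨ (i' = i ∧ m' = m + 1 ∧ n' = n) := by
  simp only [pentagramCovers, cellPt, cornerPt, Int.abs_eq_natAbs]
  omega

-- A covering relation changes the parity of `r + s`, which is constant on `Q_k`.
lemma not_pentagramCovers_of_mem_pentagramQ (hx : x ∈ pentagramQ k) (hy : y ∈ pentagramQ k) :
    ¬ pentagramCovers x y := by
  have hpx := hx.2.1
  have hpy := hy.2.1
  simp only [pentagramCovers, Int.abs_eq_natAbs]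
  omega

lemma disjoint_pentagramQ (k : ℤ) : Disjoint (pentagramQ k) (pentagramQ (k + 1)) := by
  rw [Set.disjoint_left]
  intro x hx hx'
  have hp := hx.2.1
  have hp' := hx'.2.1
  omega

lemma mem_pentagramPFinset : x ∈ pentagramPFinset k ↔ x ∈ pentagramP k := by
  simp only [pentagramPFinset, Finset.mem_filter, Finset.mem_product, Finset.mem_Icc,
    and_iff_right_iff_imp, pentagramP, pentagramQ, Set.mem_union, Set.mem_ofPred_eq,
    Int.abs_eq_natAbs]
  omega

/-- `Q_k` as a finset. -/
def pentagramQFinset (k : ℤ) : Finset (ℤ × ℤ × ℤ) :=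
  (pentagramPFinset k).filter (· ∈ pentagramQ k)

lemma mem_pentagramQFinset : x ∈ pentagramQFinset k ↔ x ∈ pentagramQ k := by
  simp only [pentagramQFinset, Finset.mem_filter, mem_pentagramPFinset, and_iff_right_iff_imp]
  exact Or.inl

lemma pentagramPFinset_eq_union (k : ℤ) :
    pentagramPFinset k = pentagramQFinset k ∪ pentagramQFinset (k + 1) := by
  ext x
  simp only [Finset.mem_union, mem_pentagramQFinset, mem_pentagramPFinset, pentagramP,
    Set.mem_union]

lemma isPentagramOrderIdeal_iff_covers {I : Set (ℤ × ℤ × ℤ)} (hI : I ⊆ pentagramP k) :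
    IsPentagramOrderIdeal k I ↔
      ∀ x ∈ pentagramP k, ∀ y ∈ I, pentagramCovers x y → x ∈ I := by
  constructor
  · rintro ⟨-, h⟩ x hx y hy hxy
    exact h x y hy (.single ⟨hx, hI hy, hxy⟩)
  · refine fun h => ⟨hI, fun x y hy hxy => ?_⟩
    induction hxy using Relation.ReflTransGen.head_induction_on with
    | refl => exact hy
    | head hstep _ ih => exact h _ hstep.1 _ ih hstep.2.2

lemma pentagramF_eq_sum_relIdeals (j k : ℤ) :
    pentagramF j k =
      ∑ I ∈ relIdeals pentagramCovers (pentagramQFinset k ∪ pentagramQFinset (k + 1)),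
        ∏ p ∈ I, X (3 * p.1 + p.2.1 + j) := by
  rw [← pentagramPFinset_eq_union]
  refine Finset.sum_congr (Finset.filter_congr fun I hI => ?_) fun _ _ => rfl
  have hIP : (I : Set (ℤ × ℤ × ℤ)) ⊆ pentagramP k :=
    fun x hx => mem_pentagramPFinset.1 (Finset.mem_powerset.1 hI hx)
  simp only [isPentagramOrderIdeal_iff_covers hIP, mem_pentagramPFinset, Finset.mem_coe]

/-- Traces on `Q_k` of the order ideals of `P_k`. -/
abbrev IsPentagramTrace (k : ℤ) : Finset (ℤ × ℤ × ℤ) → Prop :=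
  IsTrace pentagramCovers (pentagramQFinset k) (pentagramQFinset (k + 1))

/-- The least order ideal of `P_k` with a given trace on `Q_k`. -/
abbrev pentagramMinIdeal (k : ℤ) : Finset (ℤ × ℤ × ℤ) → Finset (ℤ × ℤ × ℤ) :=
  minIdeal pentagramCovers (pentagramQFinset (k + 1))

/-- The elements of `Q_{k+1}` that are free for a given trace on `Q_k`. -/
abbrev pentagramFree (k : ℤ) : Finset (ℤ × ℤ × ℤ) → Finset (ℤ × ℤ × ℤ) :=
  freeElements pentagramCovers (pentagramQFinset k) (pentagramQFinset (k + 1))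

lemma map_pentagramF {R : Type*} [CommSemiring R] (f : MvPolynomial ℤ ℤ →+* R) (j k : ℤ) :
    f (pentagramF j k) =
      ∑ J ∈ (pentagramQFinset k).powerset.filter (IsPentagramTrace k),
        (∏ p ∈ pentagramMinIdeal k J, f (X (3 * p.1 + p.2.1 + j))) *
          ∏ p ∈ pentagramFree k J, (1 + f (X (3 * p.1 + p.2.1 + j))) := by
  have hdisj : Disjoint (pentagramQFinset k) (pentagramQFinset (k + 1)) :=
    Finset.disjoint_left.2 fun x hx hx' => Set.disjoint_left.1 (disjoint_pentagramQ k)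
      (mem_pentagramQFinset.1 hx) (mem_pentagramQFinset.1 hx')
  have hQ : ∀ k', ∀ x ∈ pentagramQFinset k', ∀ y ∈ pentagramQFinset k', ¬ pentagramCovers x y :=
    fun k' x hx y hy => not_pentagramCovers_of_mem_pentagramQ (mem_pentagramQFinset.1 hx)
      (mem_pentagramQFinset.1 hy)
  simp_rw [pentagramF_eq_sum_relIdeals, map_sum, map_prod]
  exact sum_relIdeals_eq_sum_isTrace hdisj (hQ k) (hQ (k + 1)) _

end Grid

/-! ### Traces and corner sum matrices -/

section CornerSum

variable {k i m n : ℤ} {J : Finset (ℤ × ℤ × ℤ)} {N : ℤ → ℤ → ℤ}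

/-- `N`, restricted to `0 ≤ i, m ≤ k`, is the corner sum matrix of a `k × k` alternating sign
matrix: `N i m` is the sum of the entries in the first `i` rows and `m` columns. The remaining
boundary values `N 0 m = 0` and `N k m = m` follow, see `IsCornerSum.bounds`. -/
structure IsCornerSum (k : ℤ) (N : ℤ → ℤ → ℤ) : Prop where
  left : ∀ i, 0 ≤ i → i ≤ k → N i 0 = 0
  right : ∀ i, 0 ≤ i → i ≤ k → N i k = i
  row : ∀ i m, 0 ≤ i → i < k → 0 ≤ m → m ≤ k → N i m ≤ N (i + 1) m ∧ N (i + 1) m ≤ N i m + 1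
  col : ∀ i m, 0 ≤ i → i ≤ k → 0 ≤ m → m < k → N i m ≤ N i (m + 1) ∧ N i (m + 1) ≤ N i m + 1

/-- The entry at the cell `(i, m)` of the matrix with corner sums `N`. -/
def cornerSumEntry (N : ℤ → ℤ → ℤ) (i m : ℤ) : ℤ :=
  N (i + 1) (m + 1) - N (i + 1) m - N i (m + 1) + N i m

lemma IsCornerSum.bounds (hN : IsCornerSum k N) (hi : 0 ≤ i) (hik : i ≤ k) (hm : 0 ≤ m)
    (hmk : m ≤ k) : 0 ≤ N i m ∧ i + m - k ≤ N i m ∧ N i m ≤ i ∧ N i m ≤ m := by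
  have hmono : MonotoneOn (N i) (Set.Icc 0 k) :=
    monotoneOn_of_le_add_one Set.ordConnected_Icc fun a _ ha ha' =>
      (hN.col i a hi hik ha.1 (Int.lt_of_add_one_le ha'.2)).1
  have hanti : AntitoneOn (fun a => N i a - a) (Set.Icc 0 k) :=
    antitoneOn_of_add_one_le Set.ordConnected_Icc fun a _ ha ha' => by
      have := (hN.col i a hi hik ha.1 (Int.lt_of_add_one_le ha'.2)).2
      omega
  have h0 : (0 : ℤ) ∈ Set.Icc 0 k := ⟨le_rfl, hm.trans hmk⟩
  have hk : k ∈ Set.Icc 0 k := ⟨hm.trans hmk, le_rfl⟩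
  have hleft := hN.left i hi hik
  have hright := hN.right i hi hik
  have h1 := hmono h0 ⟨hm, hmk⟩ hm
  have h2 := hmono ⟨hm, hmk⟩ hk hmk
  have h3 : N i m - m ≤ N i 0 - 0 := hanti h0 ⟨hm, hmk⟩ hm
  have h4 : N i k - k ≤ N i m - m := hanti ⟨hm, hmk⟩ hk hmk
  omega

/-- Membership in `J` of the level `n` over the corner `(i, m)`, extended to all corners and to the
levels `n ≥ min i m` below all of `Q_k`, which count as present. -/
def LevelPresent (k : ℤ) (J : Finset (ℤ × ℤ × ℤ)) (i m n : ℤ) : Prop :=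
  max 0 (i + m - k) ≤ n ∧ (min i m ≤ n ∨ cornerPt k i m n ∈ J)

lemma levelPresent_iff_of_mem_pentagramQ (h : cornerPt k i m n ∈ pentagramQ k) :
    LevelPresent k J i m n ↔ cornerPt k i m n ∈ J := by
  rw [cornerPt_mem_pentagramQ] at h
  rw [LevelPresent, or_iff_right (by omega), and_iff_right (by omega)]

namespace IsTrace

lemma cornerPt_mem_of_neighbor (hJ : IsPentagramTrace k J) (hx : cornerPt k i m n ∈ pentagramQ k)
    (h : cornerPt k (i + 1) m n ∈ J ∨ cornerPt k i (m + 1) n ∈ J ∨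
      cornerPt k (i - 1) m (n - 1) ∈ J ∨ cornerPt k i (m - 1) (n - 1) ∈ J) :
    cornerPt k i m n ∈ J := by
  have hb := cornerPt_mem_pentagramQ.1 hx
  have hx' := mem_pentagramQFinset.2 hx
  have hcell : cellPt k (i - 1) m n ∈ pentagramQFinset (k + 1) := by
    rw [mem_pentagramQFinset, cellPt_mem_pentagramQ]; omega
  have hcell' : cellPt k i (m - 1) n ∈ pentagramQFinset (k + 1) := by
    rw [mem_pentagramQFinset, cellPt_mem_pentagramQ]; omega
  rcases h with h | h | h | h
  · exact hJ.descend _ hx' _ hcell' _ h (pentagramCovers_cornerPt_cellPt.2 (by omega))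
      (pentagramCovers_cellPt_cornerPt.2 (by omega))
  · exact hJ.descend _ hx' _ hcell _ h (pentagramCovers_cornerPt_cellPt.2 (by omega))
      (pentagramCovers_cellPt_cornerPt.2 (by omega))
  · exact hJ.descend _ hx' _ hcell _ h (pentagramCovers_cornerPt_cellPt.2 (by omega))
      (pentagramCovers_cellPt_cornerPt.2 (by omega))
  · exact hJ.descend _ hx' _ hcell' _ h (pentagramCovers_cornerPt_cellPt.2 (by omega))
      (pentagramCovers_cellPt_cornerPt.2 (by omega))

lemma levelPresent_of_neighbor (hJ : IsPentagramTrace k J)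
    (h : LevelPresent k J (i + 1) m n ∨ LevelPresent k J i (m + 1) n ∨
      LevelPresent k J (i - 1) m (n - 1) ∨ LevelPresent k J i (m - 1) (n - 1)) :
    LevelPresent k J i m n := by
  unfold LevelPresent at h ⊢
  refine ⟨by omega, or_iff_not_imp_left.2 fun hlow => ?_⟩
  refine hJ.cornerPt_mem_of_neighbor (cornerPt_mem_pentagramQ.2 (by omega)) ?_
  rcases h with ⟨-, h⟩ | ⟨-, h⟩ | ⟨-, h⟩ | ⟨-, h⟩
  · exact .inl (h.resolve_left (by omega))
  · exact .inr (.inl (h.resolve_left (by omega)))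
  · exact .inr (.inr (.inl (h.resolve_left (by omega))))
  · exact .inr (.inr (.inr (h.resolve_left (by omega))))

lemma levelPresent_mono (hJ : IsPentagramTrace k J) : Monotone (LevelPresent k J i m) :=
  monotone_of_le_add_one fun n _ => by
    intro (h : LevelPresent k J i m n)
    have hup : LevelPresent k J (i + 1) m (n + 1) :=
      hJ.levelPresent_of_neighbor
        (.inr (.inr (.inl (by simpa only [add_sub_cancel_right] using h))))
    exact hJ.levelPresent_of_neighbor (.inl hup)

end IsTrace

/-- The least level of `J` present over the corner `(i, m)`. -/
def leastLevel (k : ℤ) (J : Finset (ℤ × ℤ × ℤ)) (i m : ℤ) : ℤ :=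
  sInf {n | LevelPresent k J i m n}

namespace IsTrace

lemma leastLevel_le_iff (hJ : IsPentagramTrace k J) :
    leastLevel k J i m ≤ n ↔ LevelPresent k J i m n := by
  have hbdd : BddBelow {n | LevelPresent k J i m n} := ⟨0, fun n hn => le_of_max_le_left hn.1⟩
  have hne : {n | LevelPresent k J i m n}.Nonempty :=
    ⟨max (max 0 (i + m - k)) (min i m), le_max_left _ _, .inl (le_max_right _ _)⟩
  exact ⟨fun h => hJ.levelPresent_mono h (Int.csInf_mem hne hbdd), fun h => csInf_le hbdd h⟩

lemma isCornerSum_leastLevel (hJ : IsPentagramTrace k J) : IsCornerSum k (leastLevel k J) := by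
  have hmem : ∀ i m, LevelPresent k J i m (leastLevel k J i m) :=
    fun i m => hJ.leastLevel_le_iff.1 le_rfl
  refine ⟨fun i hi hik => ?_, fun i hi hik => ?_, fun i m _ _ _ _ => ⟨?_, ?_⟩,
    fun i m _ _ _ _ => ⟨?_, ?_⟩⟩
  · have hle : leastLevel k J i 0 ≤ 0 := hJ.leastLevel_le_iff.2 ⟨by omega, .inl (by omega)⟩
    exact le_antisymm hle (le_of_max_le_left (hmem i 0).1)
  · have hle : leastLevel k J i k ≤ i := hJ.leastLevel_le_iff.2 ⟨by omega, .inl (by omega)⟩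
    have hge := le_of_max_le_right (hmem i k).1
    omega
  · exact hJ.leastLevel_le_iff.2 (hJ.levelPresent_of_neighbor (.inl (hmem (i + 1) m)))
  · exact hJ.leastLevel_le_iff.2
      (hJ.levelPresent_of_neighbor (.inr (.inr (.inl (by simpa using hmem i m)))))
  · exact hJ.leastLevel_le_iff.2 (hJ.levelPresent_of_neighbor (.inr (.inl (hmem i (m + 1)))))
  · exact hJ.leastLevel_le_iff.2
      (hJ.levelPresent_of_neighbor (.inr (.inr (.inr (by simpa using hmem i m)))))

end IsTrace

/-- The elements of `Q_k` whose level is at least the value of `N` at their corner. -/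
def cornerSumTrace (k : ℤ) (N : ℤ → ℤ → ℤ) : Finset (ℤ × ℤ × ℤ) :=
  (pentagramQFinset k).filter fun x => ∃ i m n, x = cornerPt k i m n ∧ N i m ≤ n

lemma cornerPt_mem_cornerSumTrace :
    cornerPt k i m n ∈ cornerSumTrace k N ↔ cornerPt k i m n ∈ pentagramQ k ∧ N i m ≤ n := by
  simp only [cornerSumTrace, Finset.mem_filter, mem_pentagramQFinset]
  refine and_congr_right fun _ => ⟨?_, fun h => ⟨i, m, n, rfl, h⟩⟩
  rintro ⟨i', m', n', he, h⟩
  obtain ⟨rfl, rfl, rfl⟩ := cornerPt_inj.1 he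
  exact h

lemma exists_eq_cornerPt_of_mem_cornerSumTrace {x : ℤ × ℤ × ℤ} (hx : x ∈ cornerSumTrace k N) :
    ∃ i m n, x = cornerPt k i m n ∧ cornerPt k i m n ∈ pentagramQ k ∧ N i m ≤ n := by
  obtain ⟨hxQ, i, m, n, rfl, hn⟩ := Finset.mem_filter.1 hx
  exact ⟨i, m, n, rfl, mem_pentagramQFinset.1 hxQ, hn⟩

lemma IsTrace.cornerSumTrace_leastLevel (hJ : IsPentagramTrace k J) :
    cornerSumTrace k (leastLevel k J) = J := by
  have hmem : ∀ {i m n}, cornerPt k i m n ∈ pentagramQ k →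
      (leastLevel k J i m ≤ n ↔ cornerPt k i m n ∈ J) := fun hx => by
    rw [hJ.leastLevel_le_iff, levelPresent_iff_of_mem_pentagramQ hx]
  ext x
  constructor
  · intro hx
    obtain ⟨i, m, n, rfl, hxQ, hn⟩ := exists_eq_cornerPt_of_mem_cornerSumTrace hx
    exact (hmem hxQ).1 hn
  · intro hx
    have hxQ := mem_pentagramQFinset.1 (hJ.subset hx)
    obtain ⟨i, m, n, rfl⟩ := exists_eq_cornerPt hxQ
    exact cornerPt_mem_cornerSumTrace.2 ⟨hxQ, (hmem hxQ).2 hx⟩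

lemma cornerSumTrace_congr {N' : ℤ → ℤ → ℤ}
    (h : ∀ i m, 0 ≤ i → i ≤ k → 0 ≤ m → m ≤ k → N i m = N' i m) :
    cornerSumTrace k N = cornerSumTrace k N' := by
  refine Finset.filter_congr fun x hx => ?_
  obtain ⟨i, m, n, rfl⟩ := exists_eq_cornerPt (mem_pentagramQFinset.1 hx)
  have hb := cornerPt_mem_pentagramQ.1 (mem_pentagramQFinset.1 hx)
  have hNN' := h i m (by omega) (by omega) (by omega) (by omega)
  simp only [cornerPt_inj]
  grind

namespace IsCornerSum

lemma isTrace_cornerSumTrace (hN : IsCornerSum k N) : IsPentagramTrace k (cornerSumTrace k N) := by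
  refine ⟨Finset.filter_subset _ _, fun x hx y hy z hz hxy hyz => ?_⟩
  rw [mem_pentagramQFinset] at hx hy
  obtain ⟨i, m, n, rfl⟩ := exists_eq_cornerPt hx
  obtain ⟨i₁, m₁, n₁, rfl⟩ := exists_eq_cellPt hy
  obtain ⟨i₂, m₂, n₂, rfl, hzQ, hz⟩ := exists_eq_cornerPt_of_mem_cornerSumTrace hz
  refine cornerPt_mem_cornerSumTrace.2 ⟨hx, ?_⟩
  rw [cornerPt_mem_pentagramQ] at hx hzQ
  rcases pentagramCovers_cornerPt_cellPt.1 hxy with ⟨rfl, rfl, rfl⟩ | ⟨rfl, rfl, rfl⟩ <;>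
  rcases pentagramCovers_cellPt_cornerPt.1 hyz with ⟨rfl, rfl, rfl⟩ | ⟨rfl, rfl, rfl⟩
  · have := hN.row i₂ m₂ (by omega) (by omega) (by omega) (by omega); omega
  · have := hN.col (i₁ + 1) m (by omega) (by omega) (by omega) (by omega); omega
  · have := hN.col i₂ m₂ (by omega) (by omega) (by omega) (by omega); omega
  · have := hN.row i (m₁ + 1) (by omega) (by omega) (by omega) (by omega); omega

lemma forall_covered_mem_cornerSumTrace_iff (hN : IsCornerSum k N)
    (h : cellPt k i m n ∈ pentagramQ (k + 1)) :
    (∀ y ∈ pentagramQFinset k, pentagramCovers y (cellPt k i m n) → y ∈ cornerSumTrace k N) ↔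
      N (i + 1) m ≤ n ∧ N i (m + 1) ≤ n := by
  rw [cellPt_mem_pentagramQ] at h
  have hb := hN.bounds (i := i + 1) (m := m) (by omega) (by omega) (by omega) (by omega)
  have hb' := hN.bounds (i := i) (m := m + 1) (by omega) (by omega) (by omega) (by omega)
  have hcorner : ∀ i' m', pentagramCovers (cornerPt k i' m' n) (cellPt k i m n) →
      N i' m' ≤ min i' m' → (∀ y ∈ pentagramQFinset k, pentagramCovers y (cellPt k i m n) →
        y ∈ cornerSumTrace k N) → N i' m' ≤ n := by
    intro i' m' hcov hmin hmem
    by_cases hq : cornerPt k i' m' n ∈ pentagramQ k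
    · exact (cornerPt_mem_cornerSumTrace.1 (hmem _ (mem_pentagramQFinset.2 hq) hcov)).2
    · rw [cornerPt_mem_pentagramQ] at hq
      rw [pentagramCovers_cornerPt_cellPt] at hcov
      omega
  constructor
  · exact fun hmem => ⟨hcorner _ _ (pentagramCovers_cornerPt_cellPt.2 (by omega)) (by omega) hmem,
      hcorner _ _ (pentagramCovers_cornerPt_cellPt.2 (by omega)) (by omega) hmem⟩
  · rintro ⟨h1, h2⟩ y hy hcov
    rw [mem_pentagramQFinset] at hy
    obtain ⟨i', m', n', rfl⟩ := exists_eq_cornerPt hy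
    refine cornerPt_mem_cornerSumTrace.2 ⟨hy, ?_⟩
    rcases pentagramCovers_cornerPt_cellPt.1 hcov with ⟨rfl, rfl, rfl⟩ | ⟨rfl, rfl, rfl⟩
    exacts [h1, h2]

lemma forall_mem_cornerSumTrace_not_covers_iff (hN : IsCornerSum k N)
    (h : cellPt k i m n ∈ pentagramQ (k + 1)) :
    (∀ y ∈ cornerSumTrace k N, ¬ pentagramCovers (cellPt k i m n) y) ↔
      n ≤ N i m ∧ n < N (i + 1) (m + 1) := by
  rw [cellPt_mem_pentagramQ] at h
  have hb := hN.bounds (i := i) (m := m) (by omega) (by omega) (by omega) (by omega)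
  have hb' := hN.bounds (i := i + 1) (m := m + 1) (by omega) (by omega) (by omega) (by omega)
  constructor
  · intro hnot
    have hcorner : ∀ i' m' n', pentagramCovers (cellPt k i m n) (cornerPt k i' m' n') →
        cornerPt k i' m' n' ∈ pentagramQ k → n' < N i' m' := fun i' m' n' hcov hq =>
      lt_of_not_ge fun hle => hnot _ (cornerPt_mem_cornerSumTrace.2 ⟨hq, hle⟩) hcov
    have h1 := hcorner i m (n - 1) (pentagramCovers_cellPt_cornerPt.2 (by omega))
    have h2 := hcorner (i + 1) (m + 1) n (pentagramCovers_cellPt_cornerPt.2 (by omega))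
    rw [cornerPt_mem_pentagramQ] at h1 h2
    omega
  · rintro ⟨h1, h2⟩ y hy hcov
    obtain ⟨i', m', n', rfl, -, hn'⟩ := exists_eq_cornerPt_of_mem_cornerSumTrace hy
    rcases pentagramCovers_cellPt_cornerPt.1 hcov with ⟨rfl, rfl, rfl⟩ | ⟨rfl, rfl, rfl⟩ <;> omega

lemma cellPt_mem_pentagramFree_iff (hN : IsCornerSum k N) :
    cellPt k i m n ∈ pentagramFree k (cornerSumTrace k N) ↔
      (0 ≤ i ∧ i < k ∧ 0 ≤ m ∧ m < k) ∧ N i m = n ∧ cornerSumEntry N i m = 1 := by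
  have hfree : cellPt k i m n ∈ pentagramFree k (cornerSumTrace k N) ↔
      cellPt k i m n ∈ pentagramQ (k + 1) ∧ (N (i + 1) m ≤ n ∧ N i (m + 1) ≤ n) ∧
        n ≤ N i m ∧ n < N (i + 1) (m + 1) := by
    simp only [pentagramFree, freeElements, Finset.mem_filter, mem_pentagramQFinset (k := k + 1)]
    exact and_congr_right fun h => and_congr (hN.forall_covered_mem_cornerSumTrace_iff h)
      (hN.forall_mem_cornerSumTrace_not_covers_iff h)
  rw [hfree, cellPt_mem_pentagramQ]
  by_cases hcell : 0 ≤ i ∧ i < k ∧ 0 ≤ m ∧ m < k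
  · obtain ⟨hi, hik, hm, hmk⟩ := hcell
    have hb := hN.bounds hi hik.le hm hmk.le
    have hb' := hN.bounds (i := i + 1) (m := m + 1) (by omega) hik (by omega) hmk
    have hrow := hN.row i m hi hik hm hmk.le
    have hrow' := hN.row i (m + 1) hi hik (by omega) hmk
    have hcol := hN.col i m hi hik.le hm hmk
    have hcol' := hN.col (i + 1) m (by omega) hik hm hmk
    unfold cornerSumEntry
    omega
  · omega

end IsCornerSum

end CornerSum


/-! ### Permutation matrices -/

section Permutation

variable {k i m : ℤ} {c : ℤ → ℤ}

/-- The corner sums of the matrix with entries `1` at the cells `(i, c i)` and `0` elsewhere. -/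
def permCornerSum (c : ℤ → ℤ) (i m : ℤ) : ℤ :=
  ∑ i' ∈ Finset.Ico 0 i, if c i' < m then 1 else 0

lemma permCornerSum_add_one_left (hi : 0 ≤ i) :
    permCornerSum c (i + 1) m = permCornerSum c i m + if c i < m then 1 else 0 := by
  rw [permCornerSum, ← Finset.insert_Ico_right_eq_Ico_add_one hi,
    Finset.sum_insert Finset.right_notMem_Ico, add_comm, permCornerSum]

lemma permCornerSum_add_one_right (c : ℤ → ℤ) (i m : ℤ) :
    permCornerSum c i (m + 1) =
      permCornerSum c i m + ((Finset.Ico 0 i).filter (c · = m)).card := by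
  rw [permCornerSum, permCornerSum, Finset.card_filter, Nat.cast_sum, ← Finset.sum_add_distrib]
  refine Finset.sum_congr rfl fun i' _ => ?_
  grind

lemma cornerSumEntry_permCornerSum (hi : 0 ≤ i) :
    cornerSumEntry (permCornerSum c) i m = if c i = m then 1 else 0 := by
  simp only [cornerSumEntry, permCornerSum_add_one_left hi]
  grind

lemma isCornerSum_permCornerSum (hc : Set.MapsTo c (Set.Ico 0 k) (Set.Ico 0 k))
    (hinj : Set.InjOn c (Set.Ico 0 k)) : IsCornerSum k (permCornerSum c) := by
  have hrange : ∀ i ≤ k, ∀ i' ∈ Finset.Ico 0 i, 0 ≤ c i' ∧ c i' < k := fun i hik i' hi' => by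
    rw [Finset.mem_Ico] at hi'
    exact hc ⟨hi'.1, hi'.2.trans_le hik⟩
  refine ⟨fun i _ hik => ?_, fun i hi hik => ?_, fun i m hi _ _ _ => ?_, fun i m _ hik _ _ => ?_⟩
  · exact Finset.sum_eq_zero fun i' hi' => if_neg (hrange i hik i' hi').1.not_gt
  · rw [permCornerSum, Finset.sum_congr rfl fun i' hi' => if_pos (hrange i hik i' hi').2]
    simpa using hi
  · rw [permCornerSum_add_one_left hi]
    split_ifs <;> omega
  · have hcard : ((Finset.Ico 0 i).filter (c · = m)).card ≤ 1 := by
      refine Finset.card_le_one.2 fun a ha b hb => ?_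
      simp only [Finset.mem_filter, Finset.mem_Ico] at ha hb
      exact hinj ⟨ha.1.1, ha.1.2.trans_le hik⟩ ⟨hb.1.1, hb.1.2.trans_le hik⟩
        (ha.2.trans hb.2.symm)
    rw [permCornerSum_add_one_right]
    omega

lemma eq_ite_of_add_one_le {D : ℤ → ℤ} {a : ℤ} (ha : a ∈ Set.Ico 0 k) (h0 : D 0 = 0)
    (hk : D k = 1) (hD : ∀ m ∈ Set.Icc 0 k, 0 ≤ D m ∧ D m ≤ 1)
    (hstep : ∀ m ∈ Set.Ico 0 k, m ≠ a → D (m + 1) ≤ D m) (hm : m ∈ Set.Icc 0 k) :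
    D m = if a < m then 1 else 0 := by
  have hleft : AntitoneOn D (Set.Icc 0 a) :=
    antitoneOn_of_add_one_le Set.ordConnected_Icc fun m _ hm hm' =>
      hstep m (by grind) (by grind)
  have hright : AntitoneOn D (Set.Icc (a + 1) k) :=
    antitoneOn_of_add_one_le Set.ordConnected_Icc fun m _ hm hm' =>
      hstep m (by grind) (by grind)
  have hDm := hD m hm
  split_ifs with ham
  · have := hright ⟨ham, hm.2⟩ ⟨ha.2, le_rfl⟩ hm.2
    omega
  · have := hleft ⟨le_rfl, ha.1⟩ ⟨hm.1, not_lt.1 ham⟩ hm.1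
    omega

namespace IsCornerSum

variable {N : ℤ → ℤ → ℤ}

-- Every row of an alternating sign matrix sums to `1`, so a row without entries `1` other than at
-- `a` is zero except for an entry `1` at `a`.
lemma add_one_sub_eq_ite {a : ℤ} (hN : IsCornerSum k N) (hi : i ∈ Set.Ico 0 k)
    (ha : a ∈ Set.Ico 0 k) (hentry : ∀ m ∈ Set.Ico 0 k, cornerSumEntry N i m = 1 → m = a)
    (hm : m ∈ Set.Icc 0 k) : N (i + 1) m - N i m = if a < m then 1 else 0 := by
  have hD : ∀ m ∈ Set.Icc 0 k, 0 ≤ N (i + 1) m - N i m ∧ N (i + 1) m - N i m ≤ 1 :=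
    fun m hm => by
      have := hN.row i m hi.1 hi.2 hm.1 hm.2
      omega
  refine eq_ite_of_add_one_le (D := fun m => N (i + 1) m - N i m) ha ?_ ?_ hD ?_ hm
  · rw [hN.left i hi.1 hi.2.le, hN.left (i + 1) (by grind) hi.2, sub_zero]
  · rw [hN.right i hi.1 hi.2.le, hN.right (i + 1) (by grind) hi.2, add_sub_cancel_left]
  · intro m hm hma
    have hne : cornerSumEntry N i m ≠ 1 := fun h => hma (hentry m hm h)
    have := hD m ⟨hm.1, hm.2.le⟩
    have := hD (m + 1) ⟨by grind, hm.2⟩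
    unfold cornerSumEntry at hne
    omega

lemma eq_permCornerSum (hN : IsCornerSum k N) (hc : Set.MapsTo c (Set.Ico 0 k) (Set.Ico 0 k))
    (hentry : ∀ i ∈ Set.Ico 0 k, ∀ m ∈ Set.Ico 0 k, cornerSumEntry N i m = 1 → m = c i)
    (hi : 0 ≤ i) (hik : i ≤ k) (hm : 0 ≤ m) (hmk : m ≤ k) : N i m = permCornerSum c i m := by
  induction i, hi using Int.leInduction with
  | base =>
    have := hN.bounds le_rfl hik hm hmk
    simp only [permCornerSum, Finset.Ico_self, Finset.sum_empty]
    omega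
  | succ i hi ih =>
    have hiI : i ∈ Set.Ico 0 k := ⟨hi, hik⟩
    have hdiff := hN.add_one_sub_eq_ite hiI (hc hiI) (hentry i hiI) ⟨hm, hmk⟩
    rw [permCornerSum_add_one_left hi, ← ih (by omega), ← hdiff, add_sub_cancel]

end IsCornerSum

lemma pentagramFree_permCornerSum (hc : Set.MapsTo c (Set.Ico 0 k) (Set.Ico 0 k))
    (hinj : Set.InjOn c (Set.Ico 0 k)) :
    pentagramFree k (cornerSumTrace k (permCornerSum c)) =
      (Finset.Ico 0 k).image fun i => cellPt k i (c i) (permCornerSum c i (c i)) := by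
  have hN := isCornerSum_permCornerSum hc hinj
  ext x
  rw [Finset.mem_image]
  constructor
  · intro hx
    obtain ⟨i, m, n, rfl⟩ :=
      exists_eq_cellPt (mem_pentagramQFinset.1 (Finset.mem_filter.1 hx).1)
    obtain ⟨⟨hi, hik, -⟩, rfl, hentry⟩ := hN.cellPt_mem_pentagramFree_iff.1 hx
    rw [cornerSumEntry_permCornerSum hi] at hentry
    obtain rfl : c i = m := by grind
    exact ⟨i, Finset.mem_Ico.2 ⟨hi, hik⟩, rfl⟩
  · rintro ⟨i, hi, rfl⟩
    rw [Finset.mem_Ico] at hi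
    obtain ⟨hci, hcik⟩ := hc hi
    exact hN.cellPt_mem_pentagramFree_iff.2
      ⟨⟨hi.1, hi.2, hci, hcik⟩, rfl, by rw [cornerSumEntry_permCornerSum hi.1, if_pos rfl]⟩

/-- The value of `3r + s` at the elements `(r, s, t)` of `Q_{k+1}` over the cell `(i, m)`. -/
def cellIndex (k i m : ℤ) : ℤ := 4 * i + 2 * m + 3 - 3 * k

lemma three_mul_cellPt_add (k i m n : ℤ) :
    3 * (cellPt k i m n).1 + (cellPt k i m n).2.1 = cellIndex k i m := by
  simp only [cellPt, cornerPt, cellIndex]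
  ring

lemma IsTrace.eq_cornerSumTrace_permCornerSum {J : Finset (ℤ × ℤ × ℤ)} (hJ : IsPentagramTrace k J)
    (hc : Set.MapsTo c (Set.Ico 0 k) (Set.Ico 0 k))
    (hfree : ∀ i m n, cellPt k i m n ∈ pentagramFree k J → m = c i) :
    J = cornerSumTrace k (permCornerSum c) := by
  have hN := hJ.isCornerSum_leastLevel
  rw [← hJ.cornerSumTrace_leastLevel] at hfree ⊢
  refine cornerSumTrace_congr fun i m hi hik hm hmk => hN.eq_permCornerSum hc ?_ hi hik hm hmk
  exact fun i hi m hm hentry => hfree i m _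
    (hN.cellPt_mem_pentagramFree_iff.2 ⟨⟨hi.1, hi.2, hm.1, hm.2⟩, rfl, hentry⟩)

lemma IsTrace.mem_Ico_of_cellPt_mem_pentagramFree {J : Finset (ℤ × ℤ × ℤ)} {n : ℤ}
    (hJ : IsPentagramTrace k J) (h : cellPt k i m n ∈ pentagramFree k J) :
    i ∈ Set.Ico 0 k ∧ m ∈ Set.Ico 0 k := by
  rw [← hJ.cornerSumTrace_leastLevel, hJ.isCornerSum_leastLevel.cellPt_mem_pentagramFree_iff] at h
  exact ⟨⟨h.1.1, h.1.2.1⟩, h.1.2.2⟩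

lemma prod_pentagramFree_permCornerSum {R : Type*} [CommMonoid R]
    (hc : Set.MapsTo c (Set.Ico 0 k) (Set.Ico 0 k)) (hinj : Set.InjOn c (Set.Ico 0 k))
    (w : ℤ → R) :
    ∏ p ∈ pentagramFree k (cornerSumTrace k (permCornerSum c)), w (3 * p.1 + p.2.1) =
      ∏ i ∈ Finset.Ico 0 k, w (cellIndex k i (c i)) := by
  rw [pentagramFree_permCornerSum hc hinj, Finset.prod_image]
  · simp only [three_mul_cellPt_add]
  · intro i _ i' _ he
    have := (cornerPt_inj.1 he).1
    omega

theorem map_pentagramF_of_permutation {R : Type*} [CommRing R] (f : MvPolynomial ℤ ℤ →+* R) (j : ℤ)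
    (hc : Set.MapsTo c (Set.Ico 0 k) (Set.Ico 0 k)) (hinj : Set.InjOn c (Set.Ico 0 k))
    (hf : ∀ i ∈ Set.Ico 0 k, ∀ m ∈ Set.Ico 0 k, m ≠ c i → f (X (cellIndex k i m + j)) = -1) :
    f (pentagramF j k) =
      (∏ p ∈ pentagramMinIdeal k (cornerSumTrace k (permCornerSum c)),
        f (X (3 * p.1 + p.2.1 + j))) *
          ∏ i ∈ Finset.Ico 0 k, (1 + f (X (cellIndex k i (c i) + j))) := by
  rw [map_pentagramF, Finset.sum_eq_single (cornerSumTrace k (permCornerSum c))]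
  · rw [prod_pentagramFree_permCornerSum hc hinj fun a => 1 + f (X (a + j))]
  · intro J hJ hne
    have hJ : IsPentagramTrace k J := (Finset.mem_filter.1 hJ).2
    have hex : ∃ i m n, cellPt k i m n ∈ pentagramFree k J ∧ m ≠ c i := by
      by_contra! h
      exact hne (hJ.eq_cornerSumTrace_permCornerSum hc h)
    obtain ⟨i, m, n, hmem, hmc⟩ := hex
    obtain ⟨hi, hm⟩ := hJ.mem_Ico_of_cellPt_mem_pentagramFree hmem
    refine mul_eq_zero_of_right _ (Finset.prod_eq_zero hmem ?_)
    rw [three_mul_cellPt_add, hf i hi m hm hmc, add_neg_cancel]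
  · intro hnot
    have htrace := (isCornerSum_permCornerSum hc hinj).isTrace_cornerSumTrace
    exact absurd (Finset.mem_filter.2 ⟨Finset.mem_powerset.2 htrace.subset, htrace⟩) hnot

end Permutation

/-! ### The three lines -/

section Lines

variable {k l i i' m m' : ℤ}

/-- The indices `l - 2k`, `l + σ`, `l + 2k` (shifted by `-j`) of the variables left untouched by the
substitution. -/
def pentagramLines (k l : ℤ) : Set ℤ := {l - 2 * k, l + pentagramSigma k l, l + 2 * k}

lemma mem_pentagramLines {a : ℤ} : a ∈ pentagramLines k l ↔
    a = l - 2 * k ∨ a = l + pentagramSigma k l ∨ a = l + 2 * k := by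
  rfl

lemma pentagramSigma_cases (k l : ℤ) :
    (k % 2 = 1 ∧ pentagramSigma k l = 0) ∨
      (k % 2 = 0 ∧ (l + k) % 4 = 1 ∧ pentagramSigma k l = -2) ∨
      (k % 2 = 0 ∧ (l + k) % 4 ≠ 1 ∧ pentagramSigma k l = 2) := by
  unfold pentagramSigma
  split_ifs <;> omega

-- The candidates for `m` are `e - k`, `e + σ/2` and `e + k` with `2e = l - 4i - 3 + 3k`. For `k`
-- even the congruence defining `σ` excludes the one value of `e` for which none is in range.
lemma exists_cellIndex_mem_pentagramLines (hl : |l| ≤ k + 1) (hpar : (2 : ℤ) ∣ (l - (k + 1)))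
    (hi : i ∈ Set.Ico 0 k) : ∃ m ∈ Set.Ico 0 k, cellIndex k i m ∈ pentagramLines k l := by
  obtain ⟨hi, hik⟩ := hi
  obtain ⟨hl1, hl2⟩ := abs_le.1 hl
  have hσ := pentagramSigma_cases k l
  obtain ⟨e, he⟩ : ∃ e, l - 4 * i - 3 + 3 * k = 2 * e := ⟨(l - 4 * i - 3 + 3 * k) / 2, by omega⟩
  obtain ⟨s, hs⟩ : ∃ s, pentagramSigma k l = 2 * s := ⟨pentagramSigma k l / 2, by omega⟩
  simp only [mem_pentagramLines, cellIndex, Set.mem_Ico]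
  by_cases hmid : 0 ≤ e + s ∧ e + s < k
  · exact ⟨e + s, by omega⟩
  · by_cases hlow : k ≤ e
    · exact ⟨e - k, by omega⟩
    · exact ⟨e + k, by omega⟩

lemma eq_of_cellIndex_mem_pentagramLines_of_row (hm : m ∈ Set.Ico 0 k)
    (hm' : m' ∈ Set.Ico 0 k) (h : cellIndex k i m ∈ pentagramLines k l)
    (h' : cellIndex k i m' ∈ pentagramLines k l) : m = m' := by
  have hσ := pentagramSigma_cases k l
  simp only [mem_pentagramLines, cellIndex, Set.mem_Ico] at hm hm' h h'
  omega

lemma eq_of_cellIndex_mem_pentagramLines_of_col (hi : i ∈ Set.Ico 0 k)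
    (hi' : i' ∈ Set.Ico 0 k) (h : cellIndex k i m ∈ pentagramLines k l)
    (h' : cellIndex k i' m ∈ pentagramLines k l) : i = i' := by
  have hσ := pentagramSigma_cases k l
  simp only [mem_pentagramLines, cellIndex, Set.mem_Ico] at hi hi' h h'
  omega

theorem exists_permutation_pentagramLines (hl : |l| ≤ k + 1) (hpar : (2 : ℤ) ∣ (l - (k + 1))) :
    ∃ c : ℤ → ℤ, Set.MapsTo c (Set.Ico 0 k) (Set.Ico 0 k) ∧ Set.InjOn c (Set.Ico 0 k) ∧
      ∀ i ∈ Set.Ico 0 k, ∀ m ∈ Set.Ico 0 k, cellIndex k i m ∈ pentagramLines k l ↔ m = c i := by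
  have hrow : ∀ i ∈ Set.Ico 0 k, ∃ m ∈ Set.Ico 0 k, cellIndex k i m ∈ pentagramLines k l :=
    fun i hi => exists_cellIndex_mem_pentagramLines hl hpar hi
  choose! c hc hline using hrow
  refine ⟨c, fun i hi => hc i hi, fun i hi i' hi' he => ?_,
    fun i hi m hm => ⟨fun h => ?_, ?_⟩⟩
  · exact eq_of_cellIndex_mem_pentagramLines_of_col hi hi' (hline i hi)
      (he ▸ hline i' hi')
  · exact eq_of_cellIndex_mem_pentagramLines_of_row hm (hc i hi) h (hline i hi)
  · rintro rfl
    exact hline i hi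

end Lines

/-! ### The factorization -/

section Factorization

variable {ι σ R : Type*} {s : Finset ι}

/-- A monomial with coefficient `1` or `-1`. -/
def IsSignedMonomial [CommRing R] (p : MvPolynomial σ R) : Prop :=
  ∃ (ε : R) (d : σ →₀ ℕ), (ε = 1 ∨ ε = -1) ∧ p = C ε * monomial d 1

lemma isSignedMonomial_one [CommRing R] : IsSignedMonomial (1 : MvPolynomial σ R) :=
  ⟨1, 0, .inl rfl, by simp⟩

lemma isSignedMonomial_neg_one [CommRing R] : IsSignedMonomial (-1 : MvPolynomial σ R) :=
  ⟨-1, 0, .inr rfl, by simp⟩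

lemma isSignedMonomial_X [CommRing R] (i : σ) : IsSignedMonomial (X i : MvPolynomial σ R) :=
  ⟨1, Finsupp.single i 1, .inl rfl, by rw [C_1, one_mul, X]⟩

namespace IsSignedMonomial

variable [CommRing R] {p q : MvPolynomial σ R}

lemma mul (hp : IsSignedMonomial p) (hq : IsSignedMonomial q) : IsSignedMonomial (p * q) := by
  obtain ⟨ε, d, hε, rfl⟩ := hp
  obtain ⟨ε', d', hε', rfl⟩ := hq
  refine ⟨ε * ε', d + d', ?_, ?_⟩
  · rcases hε with rfl | rfl <;> rcases hε' with rfl | rfl <;> simp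
  · rw [mul_mul_mul_comm, monomial_mul, one_mul, C_mul]

lemma prod {f : ι → MvPolynomial σ R} (h : ∀ x ∈ s, IsSignedMonomial (f x)) :
    IsSignedMonomial (∏ x ∈ s, f x) :=
  Finset.prod_induction f IsSignedMonomial (fun _ _ => mul) isSignedMonomial_one h

lemma ne_zero [Nontrivial R] (hp : IsSignedMonomial p) : p ≠ 0 := by
  obtain ⟨ε, d, hε | hε, rfl⟩ := hp <;> simp [hε]

end IsSignedMonomial

lemma exists_prod_eq_pow_mul_pow_mul_pow [CommMonoid R] {f : ι → R} {x y z : R}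
    (h : ∀ p ∈ s, f p = x ∨ f p = y ∨ f p = z) :
    ∃ a b c : ℕ, a + b + c = s.card ∧ ∏ p ∈ s, f p = x ^ a * y ^ b * z ^ c := by
  induction s using Finset.induction_on with
  | empty => exact ⟨0, 0, 0, rfl, by simp⟩
  | insert q s hq ih =>
    obtain ⟨a, b, c, hcard, hprod⟩ := ih fun p hp => h p (Finset.mem_insert_of_mem hp)
    rw [Finset.prod_insert hq, hprod, Finset.card_insert_of_notMem hq]
    rcases h q (Finset.mem_insert_self q s) with hw | hw | hw <;> rw [hw]
    · exact ⟨a + 1, b, c, by omega, by rw [pow_succ' x]; simp only [mul_assoc]⟩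
    · exact ⟨a, b + 1, c, by omega, by rw [pow_succ' y]; simp only [mul_assoc, mul_left_comm y]⟩
    · exact ⟨a, b, c + 1, by omega, by rw [pow_succ' z]; simp only [mul_left_comm z]⟩

lemma one_add_X_ne_zero [CommSemiring R] [Nontrivial R] (i : σ) :
    (1 + X i : MvPolynomial σ R) ≠ 0 := by
  intro h
  simpa using congrArg (eval fun _ => (0 : R)) h

end Factorization

section Substitution

variable {j k l i m : ℤ}

lemma substNeg_X (S : Set ℤ) (i : ℤ) : substNeg S (X i) = if i ∈ S then -1 else X i := by
  simp [substNeg]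

lemma isSignedMonomial_substNeg_X (S : Set ℤ) (i : ℤ) : IsSignedMonomial (substNeg S (X i)) := by
  rw [substNeg_X]
  split_ifs
  exacts [isSignedMonomial_neg_one, isSignedMonomial_X i]

lemma substNeg_X_cellIndex_of_notMem (hi : i ∈ Set.Ico 0 k) (hm : m ∈ Set.Ico 0 k)
    (h : cellIndex k i m ∉ pentagramLines k l) :
    substNeg (AP (j - 3 * k + 3) (j + 3 * k - 3) 2 \
        {j + l - 2 * k, j + l + pentagramSigma k l, j + l + 2 * k}) (X (cellIndex k i m + j)) =
      -1 := by
  rw [substNeg_X, if_pos]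
  simp only [AP, mem_pentagramLines, cellIndex, Set.mem_sdiff, Set.mem_ofPred_eq,
    Set.mem_insert_iff, Set.mem_singleton_iff, Set.mem_Ico] at hi hm h ⊢
  omega

lemma substNeg_X_of_mem_pentagramLines {a : ℤ} (T : Set ℤ) (ha : a ∈ pentagramLines k l) :
    substNeg (T \ {j + l - 2 * k, j + l + pentagramSigma k l, j + l + 2 * k}) (X (a + j)) =
      X (a + j) := by
  rw [substNeg_X, if_neg]
  simp only [mem_pentagramLines, Set.mem_sdiff, Set.mem_insert_iff, Set.mem_singleton_iff] at ha ⊢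
  omega

lemma exists_prod_one_add_substNeg_X_eq {ι : Type*} {s : Finset ι} {g : ι → ℤ} (T : Set ℤ)
    (hg : ∀ p ∈ s, g p ∈ pentagramLines k l) :
    ∃ a b c : ℕ, a + b + c = s.card ∧
      ∏ p ∈ s, (1 + substNeg (T \ {j + l - 2 * k, j + l + pentagramSigma k l, j + l + 2 * k})
        (X (g p + j))) =
      (1 + X (j + l - 2 * k)) ^ a * (1 + X (j + l + pentagramSigma k l)) ^ b *
        (1 + X (j + l + 2 * k)) ^ c := by
  refine exists_prod_eq_pow_mul_pow_mul_pow fun p hp => ?_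
  rw [substNeg_X_of_mem_pentagramLines T (hg p hp), add_comm _ j, add_sub_assoc, add_assoc,
    add_assoc]
  rcases hg p hp with h | h | h
  · exact .inl (by rw [h])
  · exact .inr (.inl (by rw [h]))
  · exact .inr (.inr (by rw [h]))

end Substitution

theorem stmt4 (j k l : ℤ) (hk : 1 ≤ k) (hl : |l| ≤ k + 1) (hpar : (2 : ℤ) ∣ (l - (k + 1))) :
    ∃ (ε : ℤ) (d : ℤ →₀ ℕ) (a b c : ℕ),
      (ε = 1 ∨ ε = -1) ∧ ((a : ℤ) + b + c = k) ∧
      substNeg (AP (j - 3 * k + 3) (j + 3 * k - 3) 2 \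
          {j + l - 2 * k, j + l + pentagramSigma k l, j + l + 2 * k}) (pentagramF j k) =
        C ε * monomial d 1 * (1 + X (j + l - 2 * k)) ^ a *
          (1 + X (j + l + pentagramSigma k l)) ^ b * (1 + X (j + l + 2 * k)) ^ c ∧
      substNeg (AP (j - 3 * k + 3) (j + 3 * k - 3) 2 \
          {j + l - 2 * k, j + l + pentagramSigma k l, j + l + 2 * k}) (pentagramF j k) ≠ 0 := by
  obtain ⟨c, hc, hinj, hline⟩ := exists_permutation_pentagramLines hl hpar
  set S := AP (j - 3 * k + 3) (j + 3 * k - 3) 2 \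
    {j + l - 2 * k, j + l + pentagramSigma k l, j + l + 2 * k}
  have hF := map_pentagramF_of_permutation (substNeg S) j hc hinj fun i hi m hm hne =>
    substNeg_X_cellIndex_of_notMem hi hm (mt (hline i hi m hm).1 hne)
  have hM := IsSignedMonomial.prod (s := pentagramMinIdeal k (cornerSumTrace k (permCornerSum c)))
    fun p _ => isSignedMonomial_substNeg_X S (3 * p.1 + p.2.1 + j)
  obtain ⟨a, b, e, hcard, hprod⟩ := exists_prod_one_add_substNeg_X_eq (j := j) (s := Finset.Ico 0 k)
    (AP (j - 3 * k + 3) (j + 3 * k - 3) 2) fun i hi =>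
      have hi := Finset.mem_Ico.1 hi
      (hline i hi (c i) (hc hi)).2 rfl
  have hM0 := hM.ne_zero
  obtain ⟨ε, d, hε, hM⟩ := hM
  rw [hprod, ← mul_assoc, ← mul_assoc] at hF
  refine ⟨ε, d, a, b, e, hε, by rw [Int.card_Ico] at hcard; omega, hM ▸ hF, ?_⟩
  rw [hF]
  exact mul_ne_zero (mul_ne_zero (mul_ne_zero hM0 (pow_ne_zero _ (one_add_X_ne_zero _)))
    (pow_ne_zero _ (one_add_X_ne_zero _))) (pow_ne_zero _ (one_add_X_ne_zero _))

end
end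

section
/- Fix integers j, k ≥ 1, and l with |l| ≤ k+1 and l ≡ k+1 (mod 2), and let σ be as defined. Then there exists a permutation π of {1,…,k} such that for all i, c ∈ {1,…,k}: j+2i+4c−3k−3 ∈ {j+l−2k, j+l+σ, j+l+2k} if and only if c = π(i). -/
/-! Halving the entries, the condition on `(i, c)` is `i + 2c ∈ {m - k, m + σ/2, m + k}` with
`m = (l + 3k + 3)/2`, and `σ` makes the middle value differ in parity from the outer two. So rows of
one parity see only the middle value and rows of the other parity only the outer two. The value of
`σ` is moreover such that both kinds of rows obey one rule, `c + τ(i) ≡ b (mod k)`, where `b` does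
not depend on `i` and `τ` is the unshuffle, which sends the even rows and then the odd rows to `k`
consecutive integers. The bound `|l| ≤ k + 1` gives `|c + τ(i) - b| < 2k`, which leaves only the
listed values as solutions of the congruence. Since `τ` is injective modulo `k`, the rule defines a
permutation. -/

open MvPolynomial
open scoped Classical

noncomputable section

section ModEq

variable {k x y : ℤ}

theorem eq_of_modEq_of_abs_sub_lt (h : x ≡ y [ZMOD k]) (hlt : |x - y| < k) : x = y :=
  sub_eq_zero.1 (Int.eq_zero_of_abs_lt_dvd h.symm.dvd hlt)

theorem modEq_iff_of_abs_sub_lt_two_mul (hlt : |x - y| < 2 * k) :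
    x ≡ y [ZMOD k] ↔ x = y - k ∨ x = y ∨ x = y + k := by
  refine ⟨fun h => ?_, ?_⟩
  · obtain ⟨q, hq⟩ := h.symm.dvd
    have hk : 0 < k := by linarith [abs_nonneg (x - y)]
    rw [hq, abs_lt] at hlt
    have hq_lower : -2 < q := by nlinarith
    have hq_upper : q < 2 := by nlinarith
    obtain rfl | rfl | rfl : q = -1 ∨ q = 0 ∨ q = 1 := by omega
    all_goals omega
  · rintro (rfl | rfl | rfl) <;> simp [Int.ModEq]

theorem exists_mem_Icc_modEq (hk : 0 < k) (x : ℤ) : ∃ c ∈ Finset.Icc 1 k, c ≡ x [ZMOD k] := by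
  obtain ⟨z, hz_nonneg, hz_lt, hz⟩ := Int.existsUnique_equiv (x - 1) hk
  exact ⟨z + 1, Finset.mem_Icc.2 (by omega), by simpa using hz.add_right 1⟩

end ModEq

theorem exists_perm_eqOn_of_injOn {α : Type*} {s : Set α} {f : α → α} (hs : s.Finite)
    (hmaps : Set.MapsTo f s s) (hinj : Set.InjOn f s) : ∃ π : Equiv.Perm α, Set.EqOn π f s := by
  have hbij : Set.BijOn f s s := (hs.injOn_iff_bijOn_of_mapsTo hmaps).1 hinj
  exact ⟨Equiv.Perm.ofSubtype (hbij.equiv f), fun i hi => Equiv.Perm.ofSubtype_apply_of_mem _ hi⟩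

theorem exists_perm_forall_add_modEq_iff {k : ℤ} (hk : 0 < k) {τ : ℤ → ℤ}
    (hτ : ∀ i ∈ Finset.Icc 1 k, ∀ i' ∈ Finset.Icc 1 k, τ i ≡ τ i' [ZMOD k] → i = i') (b : ℤ) :
    ∃ π : Equiv.Perm ℤ, (∀ i ∈ Finset.Icc 1 k, π i ∈ Finset.Icc 1 k) ∧
      ∀ i ∈ Finset.Icc 1 k, ∀ c ∈ Finset.Icc 1 k, (c + τ i ≡ b [ZMOD k] ↔ c = π i) := by
  choose f hf_mem hf using fun i => exists_mem_Icc_modEq hk (b - τ i)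
  have hf_add (i : ℤ) : f i + τ i ≡ b [ZMOD k] := by simpa using (hf i).add_right (τ i)
  have hf_inj : Set.InjOn f (Finset.Icc 1 k) := fun i hi i' hi' hii' =>
    hτ i hi i' hi' (Int.ModEq.add_left_cancel' (f i) ((hf_add i).trans (hii' ▸ hf_add i').symm))
  obtain ⟨π, hπ⟩ :=
    exists_perm_eqOn_of_injOn (Finset.finite_toSet _) (fun i _ => hf_mem i) hf_inj
  refine ⟨π, fun i hi => hπ hi ▸ hf_mem i, fun i hi c hc => ?_⟩
  rw [hπ hi]
  refine ⟨fun h => ?_, fun h => h ▸ hf_add i⟩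
  have hmod : c ≡ f i [ZMOD k] := Int.ModEq.add_right_cancel' (τ i) (h.trans (hf_add i).symm)
  have hfi := Finset.mem_Icc.1 (hf_mem i)
  have hc := Finset.mem_Icc.1 hc
  exact eq_of_modEq_of_abs_sub_lt hmod (abs_lt.2 (by omega))

/-- The unshuffle of the rows `1, …, k`: the even rows go, in order, to `1 - ⌊k/2⌋, …, 0` and the
odd rows to `1, …, ⌈k/2⌉`. It describes the columns modulo `k`; for this reason its values are left
as `k` consecutive integers and not moved into `1, …, k`. -/
def unshuffle (k i : ℤ) : ℤ := if i % 2 = 1 then (i + 1) / 2 else i / 2 - k / 2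

section Unshuffle

variable {k i i' : ℤ}

theorem two_mul_unshuffle_of_odd (h : i % 2 = 1) : 2 * unshuffle k i = i + 1 := by
  rw [unshuffle, if_pos h]
  omega

theorem two_mul_unshuffle_of_even (h : i % 2 = 0) : 2 * unshuffle k i = i - 2 * (k / 2) := by
  rw [unshuffle, if_neg (by omega)]
  omega

theorem unshuffle_mem_Ioc (hi : i ∈ Finset.Icc 1 k) :
    unshuffle k i ∈ Finset.Ioc (-(k / 2)) (k - k / 2) := by
  rw [Finset.mem_Icc] at hi
  rw [Finset.mem_Ioc, unshuffle]
  split_ifs <;> omega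

theorem injOn_unshuffle (k : ℤ) : Set.InjOn (unshuffle k) (Finset.Icc 1 k) := by
  intro i hi i' hi' h
  rw [Finset.mem_coe, Finset.mem_Icc] at hi hi'
  unfold unshuffle at h
  split_ifs at h <;> omega

theorem eq_of_unshuffle_modEq (hi : i ∈ Finset.Icc 1 k) (hi' : i' ∈ Finset.Icc 1 k)
    (h : unshuffle k i ≡ unshuffle k i' [ZMOD k]) : i = i' := by
  have hτ := Finset.mem_Ioc.1 (unshuffle_mem_Ioc hi)
  have hτ' := Finset.mem_Ioc.1 (unshuffle_mem_Ioc hi')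
  exact injOn_unshuffle k hi hi' (eq_of_modEq_of_abs_sub_lt h (abs_lt.2 (by omega)))

end Unshuffle

section Entries

variable {k l i c b : ℤ}

theorem pentagramSigma_of_emod_eq_one (h : (l + k) % 4 = 1) :
    pentagramSigma k l = 2 * k - 2 - 4 * (k / 2) := by
  unfold pentagramSigma
  split_ifs <;> omega

theorem pentagramSigma_of_emod_eq_three (h : (l + k) % 4 = 3) :
    pentagramSigma k l = 4 * (k / 2) + 2 - 2 * k := by
  unfold pentagramSigma
  split_ifs <;> omega

theorem entry_mem_iff_modEq_of_emod_eq_one (j : ℤ) (hl : |l| ≤ k + 1) (hmod : (l + k) % 4 = 1)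
    (hb : 4 * b = l + 5 * k + 3 - 4 * (k / 2)) (hi : i ∈ Finset.Icc 1 k)
    (hc : c ∈ Finset.Icc 1 k) :
    j + 2 * i + 4 * c - 3 * k - 3 ∈
        ({j + l - 2 * k, j + l + pentagramSigma k l, j + l + 2 * k} : Set ℤ) ↔
      c + unshuffle k i ≡ b [ZMOD k] := by
  have hτ := Finset.mem_Ioc.1 (unshuffle_mem_Ioc hi)
  rw [abs_le] at hl
  rw [Finset.mem_Icc] at hi hc
  have hlt : |c + unshuffle k i - b| < 2 * k := abs_lt.2 (by omega)
  rw [modEq_iff_of_abs_sub_lt_two_mul hlt, pentagramSigma_of_emod_eq_one hmod]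
  simp only [Set.mem_insert_iff, Set.mem_singleton_iff]
  obtain heven | hodd := Int.emod_two_eq_zero_or_one i
  -- The outer values are `c + τ(i) = b - k` and `c + τ(i) = b`.
  · have hrow := two_mul_unshuffle_of_even (k := k) heven
    omega
  -- The middle value is `c + τ(i) = b`.
  · have hrow := two_mul_unshuffle_of_odd (k := k) hodd
    omega

theorem entry_mem_iff_modEq_of_emod_eq_three (j : ℤ) (hl : |l| ≤ k + 1) (hmod : (l + k) % 4 = 3)
    (hb : 4 * b = l + k + 5) (hi : i ∈ Finset.Icc 1 k) (hc : c ∈ Finset.Icc 1 k) :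
    j + 2 * i + 4 * c - 3 * k - 3 ∈
        ({j + l - 2 * k, j + l + pentagramSigma k l, j + l + 2 * k} : Set ℤ) ↔
      c + unshuffle k i ≡ b [ZMOD k] := by
  have hτ := Finset.mem_Ioc.1 (unshuffle_mem_Ioc hi)
  rw [abs_le] at hl
  rw [Finset.mem_Icc] at hi hc
  have hlt : |c + unshuffle k i - b| < 2 * k := abs_lt.2 (by omega)
  rw [modEq_iff_of_abs_sub_lt_two_mul hlt, pentagramSigma_of_emod_eq_three hmod]
  simp only [Set.mem_insert_iff, Set.mem_singleton_iff]
  obtain heven | hodd := Int.emod_two_eq_zero_or_one i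
  -- The middle value is `c + τ(i) = b`.
  · have hrow := two_mul_unshuffle_of_even (k := k) heven
    omega
  -- The outer values are `c + τ(i) = b` and `c + τ(i) = b + k`.
  · have hrow := two_mul_unshuffle_of_odd (k := k) hodd
    omega

theorem exists_forall_entry_mem_iff_modEq (j : ℤ) (hl : |l| ≤ k + 1)
    (hpar : (2 : ℤ) ∣ (l - (k + 1))) :
    ∃ b : ℤ, ∀ i ∈ Finset.Icc 1 k, ∀ c ∈ Finset.Icc 1 k,
      (j + 2 * i + 4 * c - 3 * k - 3 ∈
          ({j + l - 2 * k, j + l + pentagramSigma k l, j + l + 2 * k} : Set ℤ) ↔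
        c + unshuffle k i ≡ b [ZMOD k]) := by
  obtain hmod | hmod : (l + k) % 4 = 1 ∨ (l + k) % 4 = 3 := by omega
  · obtain ⟨b, hb⟩ : (4 : ℤ) ∣ l + 5 * k + 3 - 4 * (k / 2) := by omega
    exact ⟨b, fun _ hi _ hc => entry_mem_iff_modEq_of_emod_eq_one j hl hmod hb.symm hi hc⟩
  · obtain ⟨b, hb⟩ : (4 : ℤ) ∣ l + k + 5 := by omega
    exact ⟨b, fun _ hi _ hc => entry_mem_iff_modEq_of_emod_eq_three j hl hmod hb.symm hi hc⟩

end Entries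

theorem stmt5 (j k l : ℤ) (hk : 1 ≤ k) (hl : |l| ≤ k + 1) (hpar : (2 : ℤ) ∣ (l - (k + 1))) :
    ∃ π : Equiv.Perm ℤ, (∀ i ∈ Finset.Icc (1 : ℤ) k, π i ∈ Finset.Icc (1 : ℤ) k) ∧
      ∀ i ∈ Finset.Icc (1 : ℤ) k, ∀ c ∈ Finset.Icc (1 : ℤ) k,
        (j + 2 * i + 4 * c - 3 * k - 3 ∈
            ({j + l - 2 * k, j + l + pentagramSigma k l, j + l + 2 * k} : Set ℤ) ↔ c = π i) := by
  obtain ⟨b, hb⟩ := exists_forall_entry_mem_iff_modEq j hl hpar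
  obtain ⟨π, hπ_maps, hπ⟩ := exists_perm_forall_add_modEq_iff (Int.zero_lt_one.trans_le hk)
    (fun _ hi _ hi' => eq_of_unshuffle_modEq hi hi') b
  exact ⟨π, hπ_maps, fun i hi c hc => (hb i hi c hc).trans (hπ i hi c hc)⟩

end
end

section
/- Fix integers j, k ≥ 1, and l with |l| ≤ k+1 and l ≡ k+1 (mod 2), let σ be as defined, and let S = [j−3k+3, j+3k−3]_2 \ {j+l−2k, j+l+σ, j+l+2k}. Then there exists exactly one matrix A ∈ ASM(k) that avoids (S,j), and this A is a permutation matrix (each row and each column of A contains exactly one entry equal to 1 and no entry equal to −1). -/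
/-!
The number attached to every cell lies in the progression `[j-3k+3, j+3k-3]_2`, so an avoiding
matrix has its `1`s only in cells whose number is one of the three removed ones. With rows and
columns counted from `0` these cells form three lines `i + 2c = m`, `i + 2c = M`, `i + 2c = m + 2k`,
where `m = (l + k - 3) / 2` and `M = m + k + σ / 2`; the shift `σ` makes `m` and `M` of opposite
parity. A row `i ≡ m (mod 2)` misses the middle line, and it meets the outer two in columns that
differ by `k`, exactly one of which is in range; any other row meets only the middle line. No column
contains two of the cells, so they form the graph of a permutation `τ`.

A row of integers at most `1` with sum `1` whose only possible `1` is at `τ i` has no room for any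
other nonzero entry, so the matrix of `τ` is the only avoiding one.
-/

open MvPolynomial
open scoped Classical

noncomputable section

/-- The nonzero entries of the vector `v` alternate in sign: any two consecutive
nonzero entries have opposite signs. -/
def AltSign (k : ℕ) (v : Fin k → ℤ) : Prop :=
  ∀ c₁ c₂ : Fin k, c₁ < c₂ → v c₁ ≠ 0 → v c₂ ≠ 0 →
    (∀ c : Fin k, c₁ < c → c < c₂ → v c = 0) → v c₂ = -v c₁

/-- `A` is a `k × k` alternating sign matrix: entries in `{-1,0,1}`, the nonzero
entries of each row and column alternate in sign, and each row and column sums to `1`. -/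
def IsASM (k : ℕ) (A : Matrix (Fin k) (Fin k) ℤ) : Prop :=
  (∀ i c, A i c = -1 ∨ A i c = 0 ∨ A i c = 1) ∧
  (∀ i, AltSign k (fun c => A i c)) ∧ (∀ c, AltSign k (fun i => A i c)) ∧
  (∀ i, ∑ c, A i c = 1) ∧ (∀ c, ∑ i, A i c = 1)

/-- `A` avoids `(S, j)`: `j + 2i + 4l - 3k - 3 ∉ S` whenever `A_{il} = 1`
(rows and columns indexed `1, …, k`; here `Fin k` indices are shifted by one). -/
def ASMAvoids (k : ℕ) (j : ℤ) (S : Set ℤ) (A : Matrix (Fin k) (Fin k) ℤ) : Prop :=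
  ∀ i c : Fin k, A i c = 1 → j + 2 * ((i : ℤ) + 1) + 4 * ((c : ℤ) + 1) - 3 * k - 3 ∉ S

/-- `A` is a permutation matrix: each row and each column contains exactly one entry
equal to `1` and no entry equal to `-1` (all other entries being `0` by the ASM property). -/
def IsPermMatrix (k : ℕ) (A : Matrix (Fin k) (Fin k) ℤ) : Prop :=
  (∀ i c, A i c ≠ -1) ∧ (∀ i, ∃! c, A i c = 1) ∧ (∀ c, ∃! i, A i c = 1)

section PermMatrix

variable {n : Type*} [DecidableEq n]

lemma eq_single_of_sum_eq_one [Fintype n] {v : n → ℤ} {a : n}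
    (hle : ∀ b, v b ≤ 1) (hsum : ∑ b, v b = 1) (hone : ∀ b, v b = 1 → a = b) :
    v = Pi.single a 1 := by
  have hle_single : ∀ b ∈ Finset.univ, v b ≤ (Pi.single a 1 : n → ℤ) b := by
    intro b _
    rcases eq_or_ne b a with rfl | hba
    · simpa using hle b
    · have hlt : v b < 1 := (hle b).lt_of_ne fun h => hba (hone b h).symm
      simpa [hba] using Int.lt_add_one_iff.mp hlt
  have hsum_single : ∑ b, v b = ∑ b, (Pi.single a 1 : n → ℤ) b := by simp [hsum]
  ext b
  exact (Finset.sum_eq_sum_iff_of_le hle_single).mp hsum_single b (Finset.mem_univ b)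

lemma eq_permMatrix_of_sum_row_eq_one [Fintype n] {A : Matrix n n ℤ}
    {τ : Equiv.Perm n} (hle : ∀ i c, A i c ≤ 1) (hsum : ∀ i, ∑ c, A i c = 1)
    (hone : ∀ i c, A i c = 1 → τ i = c) : A = τ.permMatrix ℤ := by
  funext i
  exact (eq_single_of_sum_eq_one (hle i) (hsum i) (hone i)).trans
    (PEquiv.toMatrix_toPEquiv_apply τ i).symm

lemma permMatrix_apply_eq_ite {R : Type*} [Zero R] [One R] (τ : Equiv.Perm n) (i c : n) :
    τ.permMatrix R i c = if τ i = c then 1 else 0 := by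
  simp [PEquiv.toMatrix_apply, eq_comm]

lemma permMatrix_apply_eq_one_iff {R : Type*} [Zero R] [One R] [NeZero (1 : R)]
    {τ : Equiv.Perm n} {i c : n} : τ.permMatrix R i c = 1 ↔ τ i = c := by
  rw [permMatrix_apply_eq_ite]
  simp

end PermMatrix

lemma altSign_single {k : ℕ} (a : Fin k) (x : ℤ) : AltSign k (Pi.single a x) := by
  intro c₁ c₂ hlt h₁ h₂ _
  have hc₁ : c₁ = a := by_contra fun h => h₁ (by simp [h])
  have hc₂ : c₂ = a := by_contra fun h => h₂ (by simp [h])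
  exact absurd (hc₁.trans hc₂.symm) hlt.ne

lemma isASM_permMatrix {k : ℕ} (τ : Equiv.Perm (Fin k)) : IsASM k (τ.permMatrix ℤ) := by
  have hrow (i : Fin k) : (fun c => τ.permMatrix ℤ i c) = Pi.single (τ i) 1 :=
    PEquiv.toMatrix_toPEquiv_apply τ i
  have hcol (c : Fin k) : (fun i => τ.permMatrix ℤ i c) = Pi.single (τ.symm c) 1 :=
    PEquiv.transpose_toMatrix_toPEquiv_apply τ c
  refine ⟨fun i c => ?_, fun i => ?_, fun c => ?_, fun i => ?_, fun c => ?_⟩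
  · rw [permMatrix_apply_eq_ite]
    split_ifs <;> simp
  · exact hrow i ▸ altSign_single _ _
  · exact hcol c ▸ altSign_single _ _
  · rw [hrow i]
    simp
  · rw [hcol c]
    simp

lemma isPermMatrix_permMatrix {k : ℕ} (τ : Equiv.Perm (Fin k)) :
    IsPermMatrix k (τ.permMatrix ℤ) := by
  simp only [IsPermMatrix, permMatrix_apply_eq_one_iff]
  refine ⟨fun i c => ?_, fun i => existsUnique_eq', τ.bijective.existsUnique⟩
  rw [permMatrix_apply_eq_ite]
  split_ifs <;> decide

lemma IsASM.apply_le_one {k : ℕ} {A : Matrix (Fin k) (Fin k) ℤ} (hA : IsASM k A) (i c : Fin k) :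
    A i c ≤ 1 := by
  rcases hA.1 i c with h | h | h <;> simp [h]

lemma IsASM.sum_row {k : ℕ} {A : Matrix (Fin k) (Fin k) ℤ} (hA : IsASM k A) (i : Fin k) :
    ∑ c, A i c = 1 :=
  hA.2.2.2.1 i

lemma exists_perm_iff_apply_eq {α : Type*} [Finite α] {r : α → α → Prop}
    (htotal : Relator.LeftTotal r) (hunique : Relator.BiUnique r) :
    ∃ τ : Equiv.Perm α, ∀ a b, r a b ↔ τ a = b := by
  choose f hf using htotal
  have hinj : Function.Injective f := fun a a' h => hunique.1 (hf a) (h ▸ hf a')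
  refine ⟨Equiv.ofBijective f hinj.bijective_of_finite, fun a b => ⟨fun h => ?_, ?_⟩⟩
  · exact hunique.2 (hf a) h
  · rintro rfl
    exact hf a

/-- The parameter `M` of the middle line `i + 2c = M`. In terms of the original parameters it is
`m + k + σ / 2` with `2 * m + 3 = l + k`: the shift gives it the parity opposite to `m`. -/
def middleLine (k m : ℤ) : ℤ :=
  if k % 2 = 1 then m + k else if m % 2 = 1 then m + k - 1 else m + k + 1

/-- The cell in row `i` and column `c`, counted from `0`, lies on one of the lines `i + 2c = m`,
`i + 2c = middleLine k m` and `i + 2c = m + 2k`: the cells where an avoiding matrix may have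
a `1`. -/
def OnThreeLines (k : ℕ) (m : ℤ) (i c : Fin k) : Prop :=
  (i : ℤ) + 2 * c = m ∨ (i : ℤ) + 2 * c = middleLine k m ∨ (i : ℤ) + 2 * c = m + 2 * k

lemma middleLine_sub_emod_two (k m : ℤ) : (middleLine k m - m) % 2 = 1 := by
  unfold middleLine
  split_ifs <;> omega

lemma exists_add_two_mul_eq {k : ℕ} {n : ℤ} {i : Fin k} (hpar : (n - i) % 2 = 0)
    (hi : (i : ℤ) ≤ n) (hn : n ≤ i + 2 * k - 2) : ∃ c : Fin k, (i : ℤ) + 2 * c = n :=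
  ⟨⟨((n - i) / 2).toNat, by omega⟩, by simp only; omega⟩

namespace OnThreeLines

variable {k : ℕ} {m : ℤ}

lemma leftTotal (hm : -2 ≤ m) (hmk : m ≤ k - 1) : Relator.LeftTotal (OnThreeLines k m) := by
  intro i
  rcases Int.emod_two_eq_zero_or_one (m - i) with hrow | hrow
  · rcases le_or_gt (i : ℤ) m with him | him
    · obtain ⟨c, hc⟩ := exists_add_two_mul_eq hrow him (by omega)
      exact ⟨c, .inl hc⟩
    · obtain ⟨c, hc⟩ := exists_add_two_mul_eq (n := m + 2 * k) (i := i) (by omega) (by omega)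
        (by omega)
      exact ⟨c, .inr (.inr hc)⟩
  · have hpar := middleLine_sub_emod_two k m
    have hlower : (i : ℤ) ≤ middleLine k m := by
      unfold middleLine
      split_ifs <;> omega
    have hupper : middleLine k m ≤ i + 2 * k - 2 := by
      unfold middleLine
      split_ifs <;> omega
    obtain ⟨c, hc⟩ := exists_add_two_mul_eq (by omega) hlower hupper
    exact ⟨c, .inr (.inl hc)⟩

lemma rightUnique : Relator.RightUnique (OnThreeLines k m) := by
  intro i c c' h h'
  have hpar := middleLine_sub_emod_two k m
  unfold OnThreeLines at h h'
  omega

-- Within a column the outer lines are `2k` rows apart, and the middle line is `k - 1`, `k` or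
-- `k + 1` rows from each. Two cells `k - 1` rows apart would lie in rows `0` and `k - 1`, but when
-- that distance occurs, the line meeting row `0` would have an odd parameter.
lemma leftUnique : Relator.LeftUnique (OnThreeLines k m) := by
  intro i i' c h h'
  unfold OnThreeLines middleLine at h h'
  split_ifs at h h' <;> omega

lemma exists_perm_iff (hm : -2 ≤ m) (hmk : m ≤ k - 1) :
    ∃ τ : Equiv.Perm (Fin k), ∀ i c, OnThreeLines k m i c ↔ τ i = c :=
  exists_perm_iff_apply_eq (leftTotal hm hmk) ⟨leftUnique, rightUnique⟩

end OnThreeLines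

lemma pentagramSigma_eq_middleLine {k l m : ℤ} (hm : l + k = 2 * m + 3) :
    pentagramSigma k l = 2 * (middleLine k m - (m + k)) := by
  unfold pentagramSigma middleLine
  split_ifs <;> omega

lemma asmAvoids_AP_diff_iff {k : ℕ} {j : ℤ} {T : Set ℤ} {A : Matrix (Fin k) (Fin k) ℤ} :
    ASMAvoids k j (AP (j - 3 * k + 3) (j + 3 * k - 3) 2 \ T) A ↔
      ∀ i c : Fin k, A i c = 1 → j + 2 * ((i : ℤ) + 1) + 4 * ((c : ℤ) + 1) - 3 * k - 3 ∈ T := by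
  have hmem (i c : Fin k) : j + 2 * ((i : ℤ) + 1) + 4 * ((c : ℤ) + 1) - 3 * k - 3 ∈
      AP (j - 3 * k + 3) (j + 3 * k - 3) 2 := by
    refine ⟨?_, ?_, ?_⟩ <;> omega
  simp only [ASMAvoids, Set.mem_sdiff, hmem, true_and, not_not]

lemma asmAvoids_iff_onThreeLines {k : ℕ} {j l m : ℤ} (hm : l + k = 2 * m + 3)
    {A : Matrix (Fin k) (Fin k) ℤ} :
    ASMAvoids k j (AP (j - 3 * k + 3) (j + 3 * k - 3) 2 \
        {j + l - 2 * k, j + l + pentagramSigma k l, j + l + 2 * k}) A ↔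
      ∀ i c, A i c = 1 → OnThreeLines k m i c := by
  rw [asmAvoids_AP_diff_iff, pentagramSigma_eq_middleLine hm]
  refine forall₂_congr fun i c => imp_congr_right fun _ => ?_
  simp only [OnThreeLines, Set.mem_insert_iff, Set.mem_singleton_iff]
  omega

theorem stmt7_general (k : ℕ) (j l : ℤ) (hl : |l| ≤ (k : ℤ) + 1)
    (hpar : (2 : ℤ) ∣ (l - ((k : ℤ) + 1))) :
    ∃ τ : Equiv.Perm (Fin k),
      ASMAvoids k j (AP (j - 3 * k + 3) (j + 3 * k - 3) 2 \
        {j + l - 2 * k, j + l + pentagramSigma k l, j + l + 2 * k}) (τ.permMatrix ℤ) ∧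
      ∀ B : Matrix (Fin k) (Fin k) ℤ, (∀ i c, B i c ≤ 1) → (∀ i, ∑ c, B i c = 1) →
        ASMAvoids k j (AP (j - 3 * k + 3) (j + 3 * k - 3) 2 \
          {j + l - 2 * k, j + l + pentagramSigma k l, j + l + 2 * k}) B →
        B = τ.permMatrix ℤ := by
  obtain ⟨m, hm⟩ : ∃ m, l + k = 2 * m + 3 := ⟨(l + k - 3) / 2, by omega⟩
  obtain ⟨hl_lower, hl_upper⟩ := abs_le.mp hl
  obtain ⟨τ, hτ⟩ := OnThreeLines.exists_perm_iff (k := k) (m := m) (by omega) (by omega)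
  simp only [asmAvoids_iff_onThreeLines hm, hτ]
  exact ⟨τ, fun _ _ => permMatrix_apply_eq_one_iff.mp,
    fun _ => eq_permMatrix_of_sum_row_eq_one⟩

theorem stmt7 (k : ℕ) (hk : 1 ≤ k) (j l : ℤ) (hl : |l| ≤ (k : ℤ) + 1)
    (hpar : (2 : ℤ) ∣ (l - ((k : ℤ) + 1))) :
    ∃ A : Matrix (Fin k) (Fin k) ℤ,
      IsASM k A ∧
      ASMAvoids k j (AP (j - 3 * k + 3) (j + 3 * k - 3) 2 \
        {j + l - 2 * k, j + l + pentagramSigma k l, j + l + 2 * k}) A ∧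
      IsPermMatrix k A ∧
      ∀ B : Matrix (Fin k) (Fin k) ℤ, IsASM k B →
        ASMAvoids k j (AP (j - 3 * k + 3) (j + 3 * k - 3) 2 \
          {j + l - 2 * k, j + l + pentagramSigma k l, j + l + 2 * k}) B → B = A := by
  obtain ⟨τ, hτ, huniq⟩ := stmt7_general k j l hl hpar
  exact ⟨τ.permMatrix ℤ, isASM_permMatrix τ, hτ, isPermMatrix_permMatrix τ,
    fun B hB => huniq B hB.apply_le_one hB.sum_row⟩

end
end
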